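/- Let x^∞ be a sequence over a finite alphabet 𝒳. Then the limits lim_{k→∞} liminf_{n→∞} (1/k) Ĥ^k(x^n) and lim_{k→∞} limsup_{n→∞} (1/k) Ĥ^k(x^n) exist, and they satisfy ρ̲(x^∞) = lim_{k→∞} liminf_{n→∞} (1/k) Ĥ^k(x^n) and ρ̄(x^∞) = lim_{k→∞} limsup_{n→∞} (1/k) Ĥ^k(x^n). That is, best-case and worst-case compressibility may be computed using block-by-block empirical entropies in place of sliding-window empirical entropies. -/

import Mathlib

open Filter

/-- Base-2 Shannon entropy of a finitely-supported distribution given as a function. -/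
noncomputable def ent2 {β : Type*} [Fintype β] (q : β → ℝ) : ℝ :=
  ∑ b, -(q b * Real.logb 2 (q b))

/-- The `k`-th order block-by-block empirical distribution of `x^n`: the fraction of the
`⌊n/k⌋` disjoint `k`-blocks of `x^n` equal to a given word `w`. -/
noncomputable def blockDist {𝒳 : Type*} [DecidableEq 𝒳] (x : ℕ → 𝒳) (k n : ℕ)
    (w : Fin k → 𝒳) : ℝ :=
  (((Finset.range (n / k)).filter
      (fun i => (fun j : Fin k => x (k * i + (j : ℕ))) = w)).card : ℝ) / ((n / k : ℕ) : ℝ)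

/-- The `k`-th order block-by-block empirical entropy `Ĥ^k(x^n)` (base 2). -/
noncomputable def Hblock {𝒳 : Type*} [Fintype 𝒳] [DecidableEq 𝒳] (x : ℕ → 𝒳) (k n : ℕ) : ℝ :=
  ent2 (blockDist x k n)

/-- The `k`-th order sliding-window empirical distribution of `x^n`: the fraction of the
`n−k+1` length-`k` windows of `x^n` equal to a given word `w`. -/
noncomputable def swDist {𝒳 : Type*} [DecidableEq 𝒳] (x : ℕ → 𝒳) (k n : ℕ)
    (w : Fin k → 𝒳) : ℝ :=
  (((Finset.range (n - k + 1)).filter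
      (fun i => (fun j : Fin k => x (i + (j : ℕ))) = w)).card : ℝ) / ((n - k + 1 : ℕ) : ℝ)

/-- The `k`-th order sliding-window empirical entropy `Ĥ^k_sw(x^n)` (base 2). -/
noncomputable def Hsw {𝒳 : Type*} [Fintype 𝒳] [DecidableEq 𝒳] (x : ℕ → 𝒳) (k n : ℕ) : ℝ :=
  ent2 (swDist x k n)

/-- The empirical distribution of `f 0, …, f (N - 1)`. -/
noncomputable def empDist {β : Type*} [DecidableEq β] (f : ℕ → β) (N : ℕ) (b : β) : ℝ :=
  (((Finset.range N).filter (fun i => f i = b)).card : ℝ) / (N : ℝ)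

/-- A nonnegative function of total mass at most one. -/
def IsSubProb {β : Type*} [Fintype β] (Q : β → ℝ) : Prop :=
  (∀ b, 0 ≤ Q b) ∧ ∑ b, Q b ≤ 1

section Entropy

variable {β : Type*} [DecidableEq β]

lemma empDist_nonneg (f : ℕ → β) (N : ℕ) (b : β) : 0 ≤ empDist f N b := by
  unfold empDist; positivity

lemma empDist_le_one (f : ℕ → β) (N : ℕ) (b : β) : empDist f N b ≤ 1 := by
  unfold empDist
  refine div_le_one_of_le₀ ?_ (by positivity)
  exact_mod_cast (Finset.card_filter_le _ _).trans (Finset.card_range N).le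

lemma empDist_pos (f : ℕ → β) {N i : ℕ} (hi : i < N) : 0 < empDist f N (f i) := by
  unfold empDist
  have : 0 < ((Finset.range N).filter (fun j => f j = f i)).card :=
    Finset.card_pos.2 ⟨i, by simp [hi]⟩
  have hN : 0 < N := by omega
  positivity

variable [Fintype β]

lemma sum_range_eq_sum_empDist (f : ℕ → β) {N : ℕ} (hN : 0 < N) (g : β → ℝ) :
    ∑ i ∈ Finset.range N, g (f i) = N * ∑ b, empDist f N b * g b := by
  rw [← Finset.sum_fiberwise (Finset.range N) f, Finset.mul_sum]
  refine Finset.sum_congr rfl fun b _ => ?_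
  rw [Finset.sum_congr rfl (g := fun _ => g b) fun i hi => by rw [(Finset.mem_filter.1 hi).2],
    Finset.sum_const, nsmul_eq_mul]
  unfold empDist
  have : (N : ℝ) ≠ 0 := by positivity
  field_simp

lemma isSubProb_empDist (f : ℕ → β) (N : ℕ) : IsSubProb (empDist f N) := by
  refine ⟨empDist_nonneg f N, ?_⟩
  rcases Nat.eq_zero_or_pos N with rfl | hN
  · simp [empDist]
  · have h := sum_range_eq_sum_empDist f hN (fun _ => 1)
    have : (0 : ℝ) < N := by positivity
    simp only [Finset.sum_const, Finset.card_range, nsmul_eq_mul, mul_one] at h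
    nlinarith

lemma sum_neg_logb_empDist (f : ℕ → β) {N : ℕ} (hN : 0 < N) :
    ∑ i ∈ Finset.range N, -Real.logb 2 (empDist f N (f i)) = N * ent2 (empDist f N) := by
  rw [sum_range_eq_sum_empDist f hN (fun b => -Real.logb 2 (empDist f N b))]
  simp [ent2]

lemma ent2_empDist_nonneg (f : ℕ → β) (N : ℕ) : 0 ≤ ent2 (empDist f N) :=
  Finset.sum_nonneg fun b _ => neg_nonneg.2 <| mul_nonpos_of_nonneg_of_nonpos
    (empDist_nonneg f N b)
    (Real.logb_nonpos one_lt_two (empDist_nonneg f N b) (empDist_le_one f N b))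

/-- Gibbs' inequality for an empirical distribution. -/
lemma mul_ent2_empDist_le (f : ℕ → β) {N : ℕ} {Q : β → ℝ} (hQ : IsSubProb Q)
    (hpos : ∀ i < N, 0 < Q (f i)) :
    N * ent2 (empDist f N) ≤ ∑ i ∈ Finset.range N, -Real.logb 2 (Q (f i)) := by
  rcases Nat.eq_zero_or_pos N with rfl | hN
  · simp
  have hN' : (0 : ℝ) < N := by positivity
  rw [sum_range_eq_sum_empDist f hN (fun b => -Real.logb 2 (Q b))]
  refine mul_le_mul_of_nonneg_left ?_ hN'.le
  have hlog2 : 0 < Real.log 2 := Real.log_pos one_lt_two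
  have key : ∀ b, -(empDist f N b * Real.logb 2 (empDist f N b)) -
      empDist f N b * -Real.logb 2 (Q b) ≤ (Q b - empDist f N b) / Real.log 2 := by
    intro b
    rcases (empDist_nonneg f N b).eq_or_lt with h0 | h0
    · rw [← h0]
      have := div_nonneg (hQ.1 b) hlog2.le
      simpa using this
    · have hb : 0 < Q b := by
        have hc : ((Finset.range N).filter (fun i => f i = b)).card ≠ 0 := by
          intro h
          simp [empDist, h] at h0
        obtain ⟨i, hi⟩ := Finset.card_ne_zero.1 hc
        rw [Finset.mem_filter, Finset.mem_range] at hi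
        exact hi.2 ▸ hpos i hi.1
      have h1 := Real.log_le_sub_one_of_pos (div_pos hb h0)
      rw [Real.log_div hb.ne' h0.ne'] at h1
      have h2 := mul_le_mul_of_nonneg_left h1 h0.le
      rw [mul_sub (empDist f N b) (Q b / _) 1, mul_div_cancel₀ _ h0.ne'] at h2
      rw [le_div_iff₀ hlog2]
      simp only [Real.logb]
      field_simp
      linarith
  have h := Finset.sum_le_sum fun b (_ : b ∈ Finset.univ) => key b
  rw [Finset.sum_sub_distrib, ← Finset.sum_div, Finset.sum_sub_distrib] at h
  have h1 : ∑ b, empDist f N b = 1 := by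
    have h := sum_range_eq_sum_empDist f hN (fun _ => 1)
    simp only [Finset.sum_const, Finset.card_range, nsmul_eq_mul, mul_one] at h
    nlinarith
  have h2 : (∑ b, Q b - ∑ b, empDist f N b) / Real.log 2 ≤ 0 :=
    div_nonpos_of_nonpos_of_nonneg (by linarith [hQ.2]) hlog2.le
  unfold ent2
  linarith

/-- Gibbs' inequality with a side-information label `φ i < k` costing `log k` bits. -/
lemma mul_ent2_empDist_le_family (f : ℕ → β) {N k : ℕ} (hk : 0 < k) {Q : ℕ → β → ℝ}
    (hQ : ∀ p, IsSubProb (Q p)) (φ : ℕ → ℕ) (hφ : ∀ i, φ i < k)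
    (hpos : ∀ i < N, 0 < Q (φ i) (f i)) :
    N * ent2 (empDist f N) ≤
      N * Real.logb 2 k + ∑ i ∈ Finset.range N, -Real.logb 2 (Q (φ i) (f i)) := by
  have hk' : (0 : ℝ) < k := by positivity
  have hle : ∀ i, Q (φ i) (f i) / k ≤ (∑ p ∈ Finset.range k, Q p (f i)) / k := fun i =>
    div_le_div_of_nonneg_right (Finset.single_le_sum (f := fun p => Q p (f i))
      (fun p _ => (hQ p).1 _) (Finset.mem_range.2 (hφ i))) hk'.le
  have hmix : IsSubProb fun b => (∑ p ∈ Finset.range k, Q p b) / k := by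
    refine ⟨fun b => div_nonneg (Finset.sum_nonneg fun p _ => (hQ p).1 b) hk'.le, ?_⟩
    rw [← Finset.sum_div, Finset.sum_comm, div_le_one hk']
    calc ∑ p ∈ Finset.range k, ∑ b, Q p b ≤ ∑ p ∈ Finset.range k, (1 : ℝ) :=
          Finset.sum_le_sum fun p _ => (hQ p).2
      _ = k := by simp
  refine (mul_ent2_empDist_le f hmix fun i hi =>
    (div_pos (hpos i hi) hk').trans_le (hle i)).trans ?_
  have hconst : (N : ℝ) * Real.logb 2 k = ∑ i ∈ Finset.range N, Real.logb 2 k := by simp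
  rw [hconst, ← Finset.sum_add_distrib]
  refine Finset.sum_le_sum fun i hi => ?_
  have hi' := hpos i (Finset.mem_range.1 hi)
  have := Real.logb_le_logb_of_le one_lt_two (div_pos hi' hk') (hle i)
  rw [Real.logb_div hi'.ne' hk'.ne'] at this
  linarith

end Entropy

section Weights

variable {𝒳 : Type*} [Fintype 𝒳]

/-- `c y` depends only on the first `L` letters of `y` and is a sub-probability in them. -/
def IsPrefixWeight (L : ℕ) (c : (ℕ → 𝒳) → ℝ) : Prop :=
  ∃ Q : (Fin L → 𝒳) → ℝ, IsSubProb Q ∧ ∀ y : ℕ → 𝒳, Q (fun j => y j) = c y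

lemma IsPrefixWeight.append {a b : ℕ} {c d : (ℕ → 𝒳) → ℝ} (hc : IsPrefixWeight a c)
    (hd : IsPrefixWeight b d) :
    IsPrefixWeight (a + b) fun y => c y * d fun j => y (a + j) := by
  obtain ⟨Q, hQ, hQc⟩ := hc
  obtain ⟨R, hR, hRd⟩ := hd
  refine ⟨fun w => Q (fun i => w (Fin.castAdd b i)) * R (fun i => w (Fin.natAdd a i)),
    ⟨fun w => mul_nonneg (hQ.1 _) (hR.1 _), ?_⟩, fun y => ?_⟩
  · rw [← (Fin.appendEquiv a b).sum_comp]
    simp only [Fin.appendEquiv, Equiv.coe_fn_mk, Fin.append_left, Fin.append_right]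
    rw [Fintype.sum_prod_type, ← Fintype.sum_mul_sum]
    exact mul_le_one₀ hQ.2 (Finset.sum_nonneg fun w _ => hR.1 w) hR.2
  · simp [← hQc, ← hRd]

lemma isPrefixWeight_uniform [Nonempty 𝒳] (L : ℕ) :
    IsPrefixWeight L fun _ : ℕ → 𝒳 => ((Fintype.card 𝒳 : ℝ) ^ L)⁻¹ := by
  refine ⟨fun _ => ((Fintype.card 𝒳 : ℝ) ^ L)⁻¹, ⟨fun _ => by positivity, ?_⟩, fun _ => rfl⟩
  have : (Fintype.card 𝒳 : ℝ) ≠ 0 := by simp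
  simp [this]

lemma isPrefixWeight_prod {k : ℕ} {q : (Fin k → 𝒳) → ℝ} (hq : IsSubProb q) (m : ℕ) :
    IsPrefixWeight (k * m) fun y => ∏ s ∈ Finset.range m, q fun j => y (k * s + j) := by
  induction m with
  | zero => exact ⟨fun _ => 1, ⟨fun _ => zero_le_one, by simp⟩, fun _ => by simp⟩
  | succ m ih =>
    simp only [Finset.prod_range_succ]
    exact ih.append (d := fun y => q fun j => y j) ⟨q, hq, fun _ => rfl⟩

/-- Parse a word of length `L` into a prefix of length `p`, as many `k`-words weighted by `q` as
fit, and a remainder; the prefix and the remainder are weighted uniformly. -/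
lemma exists_parsing_weight [Nonempty 𝒳] {k L p : ℕ} (hp : p ≤ L) {q : (Fin k → 𝒳) → ℝ}
    (hq : IsSubProb q) :
    ∃ Q : (Fin L → 𝒳) → ℝ, IsSubProb Q ∧ ∀ y : ℕ → 𝒳, Q (fun j => y j) =
      ((Fintype.card 𝒳 : ℝ) ^ p)⁻¹ *
        (∏ s ∈ Finset.range ((L - p) / k), q fun j => y (p + (k * s + j))) *
          ((Fintype.card 𝒳 : ℝ) ^ ((L - p) % k))⁻¹ := by
  have h := ((isPrefixWeight_uniform (𝒳 := 𝒳) p).append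
    (isPrefixWeight_prod hq ((L - p) / k))).append
      (isPrefixWeight_uniform (𝒳 := 𝒳) ((L - p) % k))
  have hL : p + k * ((L - p) / k) + (L - p) % k = L := by
    rw [add_assoc, Nat.div_add_mod]; omega
  rwa [hL] at h

lemma logb_card_nonneg [Nonempty 𝒳] : 0 ≤ Real.logb 2 (Fintype.card 𝒳) :=
  Real.logb_nonneg one_lt_two (by exact_mod_cast Fintype.card_pos)

/-- Up to `2 k log |𝒳|`, the cost of a word is at most the total cost of the `k`-words of a
parsing with initial phase `p ≤ k`. -/
lemma exists_parsing_weight_logb [Nonempty 𝒳] {k L p : ℕ} (hk : 0 < k) (hpk : p ≤ k) (hp : p ≤ L)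
    {q : (Fin k → 𝒳) → ℝ} (hq : IsSubProb q) :
    ∃ Q : (Fin L → 𝒳) → ℝ, IsSubProb Q ∧ ∀ y : ℕ → 𝒳,
      (∀ s < (L - p) / k, 0 < q fun j => y (p + (k * s + j))) →
      0 < Q (fun j => y j) ∧ -Real.logb 2 (Q fun j => y j) ≤
        2 * k * Real.logb 2 (Fintype.card 𝒳) +
          ∑ s ∈ Finset.range ((L - p) / k), -Real.logb 2 (q fun j => y (p + (k * s + j))) := by
  obtain ⟨Q, hQ, hQy⟩ := exists_parsing_weight (k := k) hp hq
  refine ⟨Q, hQ, fun y hy => ?_⟩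
  have hprod : 0 < ∏ s ∈ Finset.range ((L - p) / k), q fun j => y (p + (k * s + j)) :=
    Finset.prod_pos fun s hs => hy s (Finset.mem_range.1 hs)
  have hc : 0 < (Fintype.card 𝒳 : ℝ) := by exact_mod_cast Fintype.card_pos
  rw [hQy]
  refine ⟨by positivity, ?_⟩
  rw [Real.logb_mul (by positivity) (by positivity), Real.logb_mul (by positivity) hprod.ne',
    Real.logb_inv, Real.logb_inv, Real.logb_pow, Real.logb_pow,
    Real.logb_prod _ _ fun s hs => (hy s (Finset.mem_range.1 hs)).ne', Finset.sum_neg_distrib]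
  have h1 : (p : ℝ) ≤ k := by exact_mod_cast hpk
  have h2 : (((L - p) % k : ℕ) : ℝ) ≤ k := by exact_mod_cast (Nat.mod_lt _ hk).le
  nlinarith [logb_card_nonneg (𝒳 := 𝒳)]

lemma ent2_empDist_le [DecidableEq 𝒳] [Nonempty 𝒳] {k : ℕ} (f : ℕ → Fin k → 𝒳) (N : ℕ) :
    ent2 (empDist f N) ≤ k * Real.logb 2 (Fintype.card 𝒳) := by
  rcases Nat.eq_zero_or_pos N with rfl | hN
  · simpa [ent2, empDist] using mul_nonneg k.cast_nonneg (logb_card_nonneg (𝒳 := 𝒳))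
  have hc : 0 < (Fintype.card 𝒳 : ℝ) := by exact_mod_cast Fintype.card_pos
  have hQ : IsSubProb fun _ : Fin k → 𝒳 => ((Fintype.card 𝒳 : ℝ) ^ k)⁻¹ :=
    ⟨fun _ => by positivity, by simp [hc.ne']⟩
  have h := mul_ent2_empDist_le f (N := N) hQ fun _ _ => by positivity
  have hN' : (0 : ℝ) < N := by positivity
  simp only [Real.logb_inv, Real.logb_pow, neg_neg, Finset.sum_const, Finset.card_range,
    nsmul_eq_mul] at h
  exact le_of_mul_le_mul_left h hN'

end Weights

section Sequences

variable {𝒳 : Type*} [Fintype 𝒳] [DecidableEq 𝒳]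

lemma Hblock_eq (x : ℕ → 𝒳) (k n : ℕ) :
    Hblock x k n = ent2 (empDist (fun i => fun j : Fin k => x (k * i + j)) (n / k)) := rfl

lemma Hsw_eq (x : ℕ → 𝒳) (k n : ℕ) :
    Hsw x k n = ent2 (empDist (fun i => fun j : Fin k => x (i + j)) (n - k + 1)) := rfl

/-- Summing a nonnegative function along an injective reindexing. -/
lemma sum_comp_le_of_injOn {ι κ : Type*} {s : Finset ι} {t : Finset κ} (e : ι → κ)
    (hmaps : ∀ a ∈ s, e a ∈ t) (hinj : Set.InjOn e s) {g : κ → ℝ} (hg : ∀ b, 0 ≤ g b) :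
    ∑ a ∈ s, g (e a) ≤ ∑ b ∈ t, g b := by
  classical
  rw [← Finset.sum_image (g := e) (f := g) hinj]
  exact Finset.sum_le_sum_of_subset_of_nonneg (Finset.image_subset_iff.2 hmaps) fun b _ _ => hg b

/-- Each aligned `k`-block is contained in at most `K` windows of length `K`. -/
lemma sum_blocks_in_windows_le {k K n : ℕ} (hk : 0 < k) (hKn : K ≤ n) {g : ℕ → ℝ}
    (hg : ∀ j, 0 ≤ g j) :
    ∑ i ∈ Finset.range (n - K + 1), ∑ s ∈ Finset.range ((K - (k - i % k)) / k),
      g (i / k + 1 + s) ≤ K * ∑ j ∈ Finset.range (n / k), g j := by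
  have hKg : (K : ℝ) * ∑ j ∈ Finset.range (n / k), g j =
      ∑ c ∈ Finset.range (n / k) ×ˢ Finset.range K, g c.1 := by
    simp [Finset.sum_product, Finset.mul_sum]
  rw [hKg, Finset.sum_sigma']
  have hpos : ∀ i s, s < (K - (k - i % k)) / k → i < k * (i / k + 1 + s) ∧
      k * (i / k + 1 + s) + k ≤ i + K := by
    intro i s hs
    have h1 := (Nat.le_div_iff_mul_le hk).1 (Nat.succ_le_of_lt hs)
    have h2 := Nat.div_add_mod i k
    have h3 := Nat.mod_lt i hk
    have h4 : (s + 1) * k = k * s + k := by ring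
    have h5 : k * (i / k + 1 + s) = k * (i / k) + k + k * s := by ring
    rw [Nat.succ_eq_add_one, h4] at h1
    constructor <;> omega
  refine sum_comp_le_of_injOn (g := fun c : ℕ × ℕ => g c.1)
    (fun a : (_ : ℕ) × ℕ => (a.1 / k + 1 + a.2, k * (a.1 / k + 1 + a.2) - a.1)) ?_ ?_
    fun c => hg c.1
  · rintro ⟨i, s⟩ ha
    simp only [Finset.mem_sigma, Finset.mem_range, Finset.mem_product] at ha ⊢
    obtain ⟨h1, h2⟩ := hpos i s ha.2
    refine ⟨(Nat.le_div_iff_mul_le hk).2 ?_, by omega⟩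
    rw [Nat.succ_mul, mul_comm]
    omega
  · rintro ⟨i, s⟩ ha ⟨i', s'⟩ ha' h
    simp only [Finset.coe_sigma, Set.mem_sigma_iff, Finset.coe_range, Set.mem_Iio] at ha ha'
    obtain ⟨h1, h2⟩ := hpos i s ha.2
    obtain ⟨h1', h2'⟩ := hpos i' s' ha'.2
    simp only [Prod.mk.injEq] at h
    obtain ⟨hfst, hsnd⟩ := h
    rw [← hfst] at h1' h2' hsnd
    obtain rfl : i = i' := by omega
    obtain rfl : s = s' := by omega
    rfl

/-- The windows of length `k` inside disjoint `K`-blocks, sorted by phase, are distinct. -/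
lemma sum_windows_in_blocks_le {k K n : ℕ} (hk : 0 < k) {g : ℕ → ℝ} (hg : ∀ j, 0 ≤ g j) :
    ∑ p ∈ Finset.range k, ∑ i ∈ Finset.range (n / K), ∑ s ∈ Finset.range ((K - p) / k),
      g (K * i + (p + k * s)) ≤ ∑ j ∈ Finset.range (n - k + 1), g j := by
  simp_rw [Finset.sum_sigma']
  have hpos : ∀ p s, s < (K - p) / k → p + k * s + k ≤ K := by
    intro p s hs
    have h1 := (Nat.le_div_iff_mul_le hk).1 (Nat.succ_le_of_lt hs)
    have h4 : (s + 1) * k = k * s + k := by ring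
    rw [Nat.succ_eq_add_one, h4] at h1
    omega
  refine sum_comp_le_of_injOn
    (fun a : (_ : ℕ) × (_ : ℕ) × ℕ => K * a.2.1 + (a.1 + k * a.2.2)) ?_ ?_ hg
  · rintro ⟨p, i, s⟩ ha
    simp only [Finset.mem_sigma, Finset.mem_range] at ha ⊢
    have h1 := hpos p s ha.2.2
    have h2 := (Nat.le_div_iff_mul_le (by omega : 0 < K)).1 (Nat.succ_le_of_lt ha.2.1)
    rw [Nat.succ_mul, mul_comm] at h2
    omega
  · rintro ⟨p, i, s⟩ ha ⟨p', i', s'⟩ ha' h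
    simp only [Finset.mem_coe, Finset.mem_sigma, Finset.mem_range] at ha ha' h
    have h1 := hpos p s ha.2.2
    have h1' := hpos p' s' ha'.2.2
    have hK : 0 < K := by omega
    have hi := congrArg (· / K) h
    have hr := congrArg (· % K) h
    simp only [Nat.mul_add_div hK, Nat.mul_add_mod] at hi hr
    rw [Nat.div_eq_of_lt (by omega), Nat.div_eq_of_lt (by omega)] at hi
    rw [Nat.mod_eq_of_lt (by omega), Nat.mod_eq_of_lt (by omega)] at hr
    have hs := congrArg (· / k) hr
    simp only [Nat.add_mul_div_left _ _ hk, Nat.div_eq_of_lt ha.1, Nat.div_eq_of_lt ha'.1] at hs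
    obtain rfl : i = i' := by omega
    obtain rfl : s = s' := by omega
    obtain rfl : p = p' := by omega
    rfl

lemma neg_logb_empDist_nonneg {β : Type*} [DecidableEq β] (f : ℕ → β) (N : ℕ) (b : β) :
    0 ≤ -Real.logb 2 (empDist f N b) :=
  neg_nonneg.2 (Real.logb_nonpos one_lt_two (empDist_nonneg f N b) (empDist_le_one f N b))

lemma mul_Hsw_le [Nonempty 𝒳] (x : ℕ → 𝒳) {k K n : ℕ} (hk : 0 < k) (hkK : k ≤ K) (hKn : K ≤ n) :
    ((n - K + 1 : ℕ) : ℝ) * Hsw x K n ≤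
      ((n - K + 1 : ℕ) : ℝ) * (Real.logb 2 k + 2 * k * Real.logb 2 (Fintype.card 𝒳)) +
        K * (((n / k : ℕ) : ℝ) * Hblock x k n) := by
  set B : ℕ → Fin k → 𝒳 := fun i => fun j : Fin k => x (k * i + j) with hB
  choose Q hQ hQy using fun a : ℕ => exists_parsing_weight_logb (L := K) hk (Nat.sub_le k (a % k))
    ((Nat.sub_le k (a % k)).trans hkK) (isSubProb_empDist B (n / k))
  have hword : ∀ i s, (fun j : Fin k => x (i + ((k - i % k) + (k * s + j)))) =
      B (i / k + 1 + s) := by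
    intro i s
    funext j
    have h2 := Nat.div_add_mod i k
    have h3 := Nat.mod_lt i hk
    have h5 : k * (i / k + 1 + s) = k * (i / k) + k + k * s := by ring
    simp only [hB]
    congr 1
    omega
  have hlt : ∀ i < n - K + 1, ∀ s < (K - (k - i % k)) / k, i / k + 1 + s < n / k := by
    intro i hi s hs
    have h1 := (Nat.le_div_iff_mul_le hk).1 (Nat.succ_le_of_lt hs)
    have h2 := Nat.div_add_mod i k
    have h3 := Nat.mod_lt i hk
    refine (Nat.le_div_iff_mul_le hk).2 ?_
    have h4 : (s + 1) * k = k * s + k := by ring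
    have h5 : (i / k + 1 + s).succ * k = k * (i / k) + k + k * s + k := by
      rw [Nat.succ_eq_add_one]; ring
    rw [Nat.succ_eq_add_one, h4] at h1
    omega
  have hmod : ∀ i, i % k % k = i % k := fun i => Nat.mod_mod i k
  have hcost : ∀ i < n - K + 1, 0 < Q (i % k) (fun j => x (i + j)) ∧
      -Real.logb 2 (Q (i % k) fun j => x (i + j)) ≤
        2 * k * Real.logb 2 (Fintype.card 𝒳) + ∑ s ∈ Finset.range ((K - (k - i % k)) / k),
          -Real.logb 2 (empDist B (n / k) (B (i / k + 1 + s))) := by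
    intro i hi
    have h := hQy (i % k) fun j => x (i + j)
    simp only [hmod, hword] at h
    exact h fun s hs => empDist_pos B (hlt i hi s hs)
  have hgibbs := mul_ent2_empDist_le_family (fun i => fun j : Fin K => x (i + j)) hk hQ
    (fun i => i % k) (fun i => Nat.mod_lt i hk) fun i hi => (hcost i hi).1
  have hsum := Finset.sum_le_sum fun i (hi : i ∈ Finset.range (n - K + 1)) =>
    (hcost i (Finset.mem_range.1 hi)).2
  rw [Finset.sum_add_distrib, Finset.sum_const, Finset.card_range, nsmul_eq_mul] at hsum
  have hblocks := sum_blocks_in_windows_le hk hKn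
    (fun j => neg_logb_empDist_nonneg B (n / k) (B j))
  rw [sum_neg_logb_empDist B (Nat.div_pos (hkK.trans hKn) hk), ← Hblock_eq] at hblocks
  rw [← Hsw_eq] at hgibbs
  linarith

lemma mul_Hblock_le [Nonempty 𝒳] (x : ℕ → 𝒳) {k K n : ℕ} (hk : 0 < k) (hkK : k ≤ K) :
    (k : ℝ) * (((n / K : ℕ) : ℝ) * Hblock x K n) ≤
      k * (((n / K : ℕ) : ℝ) * (2 * k * Real.logb 2 (Fintype.card 𝒳))) +
        ((n - k + 1 : ℕ) : ℝ) * Hsw x k n := by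
  set W : ℕ → Fin k → 𝒳 := fun i => fun j : Fin k => x (i + j) with hW
  have hlt : ∀ p, ∀ i < n / K, ∀ s < (K - p) / k, K * i + (p + k * s) < n - k + 1 := by
    intro p i hi s hs
    have h1 := (Nat.le_div_iff_mul_le hk).1 (Nat.succ_le_of_lt hs)
    have h2 := (Nat.le_div_iff_mul_le (by omega : 0 < K)).1 (Nat.succ_le_of_lt hi)
    have h4 : (s + 1) * k = k * s + k := by ring
    rw [Nat.succ_eq_add_one, h4] at h1
    rw [Nat.succ_mul, mul_comm] at h2
    omega
  have hphase : ∀ p ∈ Finset.range k, ((n / K : ℕ) : ℝ) * Hblock x K n ≤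
      ((n / K : ℕ) : ℝ) * (2 * k * Real.logb 2 (Fintype.card 𝒳)) +
        ∑ i ∈ Finset.range (n / K), ∑ s ∈ Finset.range ((K - p) / k),
          -Real.logb 2 (empDist W (n - k + 1) (W (K * i + (p + k * s)))) := by
    intro p hp
    have hpk := (Finset.mem_range.1 hp).le
    obtain ⟨Q, hQ, hQy⟩ := exists_parsing_weight_logb (L := K) hk hpk (hpk.trans hkK)
      (isSubProb_empDist W (n - k + 1))
    have hcost : ∀ i < n / K, 0 < Q (fun j => x (K * i + j)) ∧
        -Real.logb 2 (Q fun j => x (K * i + j)) ≤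
          2 * k * Real.logb 2 (Fintype.card 𝒳) + ∑ s ∈ Finset.range ((K - p) / k),
            -Real.logb 2 (empDist W (n - k + 1) (W (K * i + (p + k * s)))) := by
      intro i hi
      have h := hQy fun j => x (K * i + j)
      have hword : ∀ s, (fun j : Fin k => x (K * i + (p + (k * s + j)))) =
          W (K * i + (p + k * s)) := by
        intro s
        simp only [hW, add_assoc]
      simp only [hword] at h
      exact h fun s hs => empDist_pos W (hlt p i hi s hs)
    have hgibbs := mul_ent2_empDist_le (fun i => fun j : Fin K => x (K * i + j)) hQ
      fun i hi => (hcost i hi).1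
    have hsum := Finset.sum_le_sum fun i (hi : i ∈ Finset.range (n / K)) =>
      (hcost i (Finset.mem_range.1 hi)).2
    rw [Finset.sum_add_distrib, Finset.sum_const, Finset.card_range, nsmul_eq_mul] at hsum
    rw [← Hblock_eq] at hgibbs
    linarith
  have h := Finset.sum_le_sum hphase
  rw [Finset.sum_add_distrib, Finset.sum_const, Finset.sum_const, Finset.card_range, nsmul_eq_mul,
    nsmul_eq_mul] at h
  have hwin := sum_windows_in_blocks_le (K := K) (n := n) hk
    (fun j => neg_logb_empDist_nonneg W (n - k + 1) (W j))
  rw [sum_neg_logb_empDist W (Nat.succ_pos _), ← Hsw_eq] at hwin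
  linarith

lemma Hsw_rate_mem [Nonempty 𝒳] (x : ℕ → 𝒳) (k n : ℕ) :
    (1 / (k : ℝ)) * Hsw x k n ∈ Set.Icc 0 (Real.logb 2 (Fintype.card 𝒳)) := by
  rcases Nat.eq_zero_or_pos k with rfl | hk
  · simpa using logb_card_nonneg (𝒳 := 𝒳)
  rw [Hsw_eq, one_div_mul_eq_div]
  exact ⟨div_nonneg (ent2_empDist_nonneg _ _) k.cast_nonneg,
    (div_le_iff₀' (by positivity)).2 (ent2_empDist_le _ _)⟩

lemma Hblock_rate_mem [Nonempty 𝒳] (x : ℕ → 𝒳) (k n : ℕ) :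
    (1 / (k : ℝ)) * Hblock x k n ∈ Set.Icc 0 (Real.logb 2 (Fintype.card 𝒳)) := by
  rcases Nat.eq_zero_or_pos k with rfl | hk
  · simpa using logb_card_nonneg (𝒳 := 𝒳)
  rw [Hblock_eq, one_div_mul_eq_div]
  exact ⟨div_nonneg (ent2_empDist_nonneg _ _) k.cast_nonneg,
    (div_le_iff₀' (by positivity)).2 (ent2_empDist_le _ _)⟩

end Sequences

section Limits

/-- A rate bound with relative error vanishing as `n → ∞` and additive error `C / K`. -/
lemma eventually_le_add_of_le_div {F G : ℕ → ℕ → ℝ} {C D : ℝ} {k : ℕ}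
    (hG : ∀ n, G k n ∈ Set.Icc 0 D)
    (h : ∀ K n, k ≤ K → K ≤ n →
      F K n ≤ C / K + (n : ℝ) / ((n - K + 1 : ℕ) : ℝ) * G k n) {ε : ℝ} (hε : 0 < ε) :
    ∀ᶠ K in atTop, ∀ᶠ n in atTop, F K n ≤ G k n + ε := by
  have hC : Tendsto (fun K : ℕ => C / (K : ℝ)) atTop (nhds 0) :=
    tendsto_const_div_atTop_nhds_zero_nat C
  filter_upwards [hC.eventually_lt_const (half_pos hε), eventually_ge_atTop k] with K hK hkK
  have hn : Tendsto (fun n : ℕ => ((K : ℝ) * D) / ((n - K + 1 : ℕ) : ℝ)) atTop (nhds 0) :=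
    (tendsto_const_div_atTop_nhds_zero_nat _).comp
      (tendsto_atTop_atTop.2 fun b => ⟨b + K, fun a ha => by omega⟩)
  filter_upwards [hn.eventually_lt_const (half_pos hε), eventually_ge_atTop K] with n hn hKn
  refine (h K n hkK hKn).trans ?_
  have hpos : (0 : ℝ) < ((n - K + 1 : ℕ) : ℝ) := by positivity
  have hcast : (n : ℝ) = ((n - K + 1 : ℕ) : ℝ) + K - 1 := by
    push_cast [Nat.cast_sub hKn]; ring
  have h1 : (n : ℝ) / ((n - K + 1 : ℕ) : ℝ) * G k n ≤
      G k n + (K : ℝ) * D / ((n - K + 1 : ℕ) : ℝ) := by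
    rw [div_mul_eq_mul_div, div_le_iff₀ hpos, add_mul, div_mul_cancel₀ _ hpos.ne', hcast]
    have := (hG n).1
    have := mul_le_mul_of_nonneg_left (hG n).2 K.cast_nonneg (α := ℝ)
    nlinarith
  linarith

lemma isBoundedUnder_le_of_mem_Icc {u : ℕ → ℝ} {D : ℝ} (hu : ∀ n, u n ∈ Set.Icc 0 D) :
    IsBoundedUnder (· ≤ ·) atTop u := isBoundedUnder_of ⟨D, fun n => (hu n).2⟩

lemma isBoundedUnder_ge_of_mem_Icc {u : ℕ → ℝ} {D : ℝ} (hu : ∀ n, u n ∈ Set.Icc 0 D) :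
    IsBoundedUnder (· ≥ ·) atTop u := isBoundedUnder_of ⟨0, fun n => (hu n).1⟩

lemma liminf_mem_Icc {u : ℕ → ℝ} {D : ℝ} (hu : ∀ n, u n ∈ Set.Icc 0 D) :
    liminf u atTop ∈ Set.Icc 0 D :=
  ⟨le_liminf_of_le (isBoundedUnder_le_of_mem_Icc hu).isCoboundedUnder_ge
      (Eventually.of_forall fun n => (hu n).1),
    liminf_le_of_le (isBoundedUnder_ge_of_mem_Icc hu) fun _ hb =>
      let ⟨n, hn⟩ := hb.exists
      hn.trans (hu n).2⟩

lemma limsup_mem_Icc {u : ℕ → ℝ} {D : ℝ} (hu : ∀ n, u n ∈ Set.Icc 0 D) :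
    limsup u atTop ∈ Set.Icc 0 D :=
  ⟨le_limsup_of_le (isBoundedUnder_le_of_mem_Icc hu) fun _ hb =>
      let ⟨n, hn⟩ := hb.exists
      (hu n).1.trans hn,
    limsup_le_of_le (isBoundedUnder_ge_of_mem_Icc hu).isCoboundedUnder_le
      (Eventually.of_forall fun n => (hu n).2)⟩

lemma liminf_le_liminf_add {u v : ℕ → ℝ} {D ε : ℝ} (hu : ∀ n, u n ∈ Set.Icc 0 D)
    (hv : ∀ n, v n ∈ Set.Icc 0 D) (h : ∀ᶠ n in atTop, u n ≤ v n + ε) :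
    liminf u atTop ≤ liminf v atTop + ε := by
  rw [← liminf_add_const atTop v ε (isBoundedUnder_le_of_mem_Icc hv).isCoboundedUnder_ge
    (isBoundedUnder_ge_of_mem_Icc hv)]
  exact liminf_le_liminf h (isBoundedUnder_ge_of_mem_Icc hu)
    (isBoundedUnder_of ⟨D + ε, fun n => by linarith [(hv n).2]⟩ :
      IsBoundedUnder (· ≤ ·) atTop fun n => v n + ε).isCoboundedUnder_ge

lemma limsup_le_limsup_add {u v : ℕ → ℝ} {D ε : ℝ} (hu : ∀ n, u n ∈ Set.Icc 0 D)
    (hv : ∀ n, v n ∈ Set.Icc 0 D) (h : ∀ᶠ n in atTop, u n ≤ v n + ε) :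
    limsup u atTop ≤ limsup v atTop + ε := by
  rw [← limsup_add_const atTop v ε (isBoundedUnder_le_of_mem_Icc hv)
    (isBoundedUnder_ge_of_mem_Icc hv).isCoboundedUnder_le]
  exact limsup_le_limsup h (isBoundedUnder_ge_of_mem_Icc hu).isCoboundedUnder_le
    (isBoundedUnder_of ⟨D + ε, fun n => by linarith [(hv n).2]⟩)

lemma limsup_le_liminf_of_forall_le_add {u v : ℕ → ℝ} {D : ℝ} (hu : ∀ n, u n ∈ Set.Icc 0 D)
    (hv : ∀ n, v n ∈ Set.Icc 0 D)
    (h : ∀ k, 0 < k → ∀ ε > 0, ∀ᶠ K in atTop, u K ≤ v k + ε) :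
    limsup u atTop ≤ liminf v atTop := by
  refine le_liminf_of_le (isBoundedUnder_le_of_mem_Icc hv).isCoboundedUnder_ge ?_
  filter_upwards [eventually_gt_atTop 0] with k hk
  exact le_of_forall_pos_le_add fun ε hε =>
    limsup_le_of_le (isBoundedUnder_ge_of_mem_Icc hu).isCoboundedUnder_le (h k hk ε hε)

/-- Two bounded sequences, each asymptotically below every term of the other, converge to a common
limit. -/
lemma tendsto_liminf_limsup_of_forall_le_add {u v : ℕ → ℝ} {D : ℝ}
    (hu : ∀ n, u n ∈ Set.Icc 0 D) (hv : ∀ n, v n ∈ Set.Icc 0 D)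
    (huv : ∀ k, 0 < k → ∀ ε > 0, ∀ᶠ K in atTop, u K ≤ v k + ε)
    (hvu : ∀ k, 0 < k → ∀ ε > 0, ∀ᶠ K in atTop, v K ≤ u k + ε) :
    Tendsto v atTop (nhds (liminf u atTop)) ∧ Tendsto v atTop (nhds (limsup u atTop)) := by
  have h1 := limsup_le_liminf_of_forall_le_add hu hv huv
  have h2 := limsup_le_liminf_of_forall_le_add hv hu hvu
  have h3 := liminf_le_limsup (isBoundedUnder_le_of_mem_Icc hu) (isBoundedUnder_ge_of_mem_Icc hu)
  exact ⟨tendsto_of_le_liminf_of_limsup_le (h3.trans h1) h2 (isBoundedUnder_le_of_mem_Icc hv)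
      (isBoundedUnder_ge_of_mem_Icc hv),
    tendsto_of_le_liminf_of_limsup_le h1 (h2.trans h3) (isBoundedUnder_le_of_mem_Icc hv)
      (isBoundedUnder_ge_of_mem_Icc hv)⟩

end Limits

section Rates

variable {𝒳 : Type*} [Fintype 𝒳] [DecidableEq 𝒳] [Nonempty 𝒳]

lemma Hsw_rate_le (x : ℕ → 𝒳) {k K n : ℕ} (hk : 0 < k) (hkK : k ≤ K) (hKn : K ≤ n) :
    (1 / (K : ℝ)) * Hsw x K n ≤
      (Real.logb 2 k + 2 * k * Real.logb 2 (Fintype.card 𝒳)) / K +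
        (n : ℝ) / ((n - K + 1 : ℕ) : ℝ) * ((1 / (k : ℝ)) * Hblock x k n) := by
  have h := mul_Hsw_le x hk hkK hKn
  set N : ℝ := ((n - K + 1 : ℕ) : ℝ) with hN
  have hN0 : 0 < N := by positivity
  have hk0 : (0 : ℝ) < k := by positivity
  have hK0 : (0 : ℝ) < K := by exact_mod_cast hk.trans_le hkK
  have hdiv : ((n / k : ℕ) : ℝ) ≤ n / k := Nat.cast_div_le
  have hnn : 0 ≤ Hblock x k n := ent2_empDist_nonneg _ _
  have h' : N * Hsw x K n ≤ N * (Real.logb 2 k + 2 * k * Real.logb 2 (Fintype.card 𝒳)) +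
      K * ((n / k : ℝ) * Hblock x k n) := h.trans (by gcongr)
  have h'' := div_le_div_of_nonneg_right h' (mul_pos hN0 hK0).le
  refine le_of_eq_of_le ?_ (h''.trans_eq ?_) <;> field_simp

lemma Hblock_rate_le (x : ℕ → 𝒳) {k K n : ℕ} (hk : 0 < k) (hkK : k ≤ K) (hKn : K ≤ n) :
    (1 / (K : ℝ)) * Hblock x K n ≤
      (2 * k * Real.logb 2 (Fintype.card 𝒳)) / K +
        (n : ℝ) / ((n - K + 1 : ℕ) : ℝ) * ((1 / (k : ℝ)) * Hsw x k n) := by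
  have h := mul_Hblock_le x (n := n) hk hkK
  have hM : 0 < n / K := Nat.div_pos hKn (hk.trans_le hkK)
  have hNM : n - K + 1 ≤ K * (n / K) := by
    have := Nat.div_add_mod n K
    have := Nat.mod_lt n (hk.trans_le hkK)
    omega
  have hNM' : ((n - K + 1 : ℕ) : ℝ) ≤ K * ((n / K : ℕ) : ℝ) := by exact_mod_cast hNM
  have hn : ((n - k + 1 : ℕ) : ℝ) ≤ n := by
    exact_mod_cast (by omega : n - k + 1 ≤ n)
  set N : ℝ := ((n - K + 1 : ℕ) : ℝ) with hN
  set M : ℝ := ((n / K : ℕ) : ℝ) with hMdef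
  have hM0 : 0 < M := by positivity
  have hN0 : 0 < N := by positivity
  have hk0 : (0 : ℝ) < k := by positivity
  have hK0 : (0 : ℝ) < K := by exact_mod_cast hk.trans_le hkK
  have hnn : 0 ≤ Hsw x k n := ent2_empDist_nonneg _ _
  have h'' := div_le_div_of_nonneg_right h (by positivity : 0 ≤ k * (K * M))
  have hL : (k : ℝ) * (M * Hblock x K n) / (k * (K * M)) = 1 / (K : ℝ) * Hblock x K n := by
    field_simp
  have hR : (k * (M * (2 * k * Real.logb 2 (Fintype.card 𝒳))) +
      ((n - k + 1 : ℕ) : ℝ) * Hsw x k n) / (k * (K * M)) =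
      (2 * k * Real.logb 2 (Fintype.card 𝒳)) / K +
        ((n - k + 1 : ℕ) : ℝ) / (K * M) * (1 / (k : ℝ) * Hsw x k n) := by
    field_simp
  rw [hL, hR] at h''
  refine h''.trans ?_
  gcongr

end Rates

/-- The paper's Lemma 1: for any sequence over a finite alphabet, the per-symbol
block-by-block empirical entropies converge (in `k`, after taking liminf resp. limsup in
`n`) to the best-case compressibility `ρ̲` resp. the worst-case compressibility `ρ̄`,
which are defined via sliding-window empirical entropies. -/
theorem compressibility_block_eq_sliding {𝒳 : Type*} [Fintype 𝒳] [DecidableEq 𝒳]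
    (x : ℕ → 𝒳) :
    Tendsto (fun k : ℕ => liminf (fun n : ℕ => (1 / (k : ℝ)) * Hblock x k n) atTop) atTop
      (nhds (liminf (fun k : ℕ =>
        liminf (fun n : ℕ => (1 / (k : ℝ)) * Hsw x k n) atTop) atTop))
    ∧ Tendsto (fun k : ℕ => limsup (fun n : ℕ => (1 / (k : ℝ)) * Hblock x k n) atTop) atTop
      (nhds (limsup (fun k : ℕ =>
        limsup (fun n : ℕ => (1 / (k : ℝ)) * Hsw x k n) atTop) atTop)) := by
  have : Nonempty 𝒳 := ⟨x 0⟩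
  have hS := Hsw_rate_mem x
  have hB := Hblock_rate_mem x
  have hSB : ∀ k : ℕ, 0 < k → ∀ ε > (0 : ℝ), ∀ᶠ K : ℕ in atTop, ∀ᶠ n : ℕ in atTop,
      (1 / (K : ℝ)) * Hsw x K n ≤ (1 / (k : ℝ)) * Hblock x k n + ε := fun k hk ε hε =>
    eventually_le_add_of_le_div (F := fun k n => (1 / (k : ℝ)) * Hsw x k n)
      (G := fun k n => (1 / (k : ℝ)) * Hblock x k n) (hB k)
      (fun _ _ hkK hKn => Hsw_rate_le x hk hkK hKn) hε
  have hBS : ∀ k : ℕ, 0 < k → ∀ ε > (0 : ℝ), ∀ᶠ K : ℕ in atTop, ∀ᶠ n : ℕ in atTop,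
      (1 / (K : ℝ)) * Hblock x K n ≤ (1 / (k : ℝ)) * Hsw x k n + ε := fun k hk ε hε =>
    eventually_le_add_of_le_div (F := fun k n => (1 / (k : ℝ)) * Hblock x k n)
      (G := fun k n => (1 / (k : ℝ)) * Hsw x k n) (hS k)
      (fun _ _ hkK hKn => Hblock_rate_le x hk hkK hKn) hε
  exact ⟨(tendsto_liminf_limsup_of_forall_le_add (fun k => liminf_mem_Icc (hS k))
      (fun k => liminf_mem_Icc (hB k))
      (fun k hk ε hε => (hSB k hk ε hε).mono fun K h => liminf_le_liminf_add (hS K) (hB k) h)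
      fun k hk ε hε => (hBS k hk ε hε).mono fun K h => liminf_le_liminf_add (hB K) (hS k) h).1,
    (tendsto_liminf_limsup_of_forall_le_add (fun k => limsup_mem_Icc (hS k))
      (fun k => limsup_mem_Icc (hB k))
      (fun k hk ε hε => (hSB k hk ε hε).mono fun K h => limsup_le_limsup_add (hS K) (hB k) h)
      fun k hk ε hε => (hBS k hk ε hε).mono fun K h => limsup_le_limsup_add (hB K) (hS k) h).2⟩
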